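/- Let n and m be natural numbers and let d_1,…,d_n, a_1,…,a_m, b_1,…,b_m be rational numbers. Assume (not a solid torus) that m ≥ 1 or at least two of the d_i are not integers, and assume that the quantity n̄_D + N_G is positive, where n̄_D := #{ i : d_i is not an integer } and N_G := #{ j : a_j is an integer } + #{ j : b_j is an integer }. For every positive integer k set y₋(k) := −(1/k)·(1 + Σ_{i=1}^{n} ⌊d_i·k⌋ + Σ_{j=1}^{m} (⌈a_j·k⌉ − 1)) and y₊(k) := −(1/k)·(−1 + Σ_{i=1}^{n} ⌈d_i·k⌉ + Σ_{j=1}^{m} (⌊b_j·k⌋ + 1)). If y₋ ∈ ℚ is the greatest element of { y₋(k) : k a positive integer }, y₊ ∈ ℚ is the least element of { y₊(k) : k a positive integer }, and y₋ = y₊, then y₋ = y₋(1), y₊ = y₊(1), and y₋ is an integer. -/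

import Mathlib

/-- The integer `1 + Σ ⌊d k⌋ + Σ (⌈a k⌉ - 1)`. -/
def AA {n m : ℕ} (d : Fin n → ℚ) (a : Fin m → ℚ) (k : ℕ) : ℤ :=
  1 + (∑ i, ⌊d i * (k:ℚ)⌋) + ∑ j, (⌈a j * (k:ℚ)⌉ - 1)

lemma floor_def (x : ℚ) (k l : ℕ) :
    0 ≤ ⌊x * ((k + l : ℕ):ℚ)⌋ - ⌊x * (k:ℚ)⌋ - ⌊x * (l:ℚ)⌋ := by
  have := Int.le_floor_add (x * k) (x * l)
  push_cast
  rw [mul_add]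
  linarith

lemma ceil_def (x : ℚ) (k l : ℕ) :
    0 ≤ (⌈x * ((k + l : ℕ):ℚ)⌉ - 1) - (⌈x * (k:ℚ)⌉ - 1) - (⌈x * (l:ℚ)⌉ - 1) := by
  have := Int.ceil_add_ceil_le (x * k) (x * l)
  push_cast
  rw [mul_add]
  linarith

lemma AA_eq {n m : ℕ} (d : Fin n → ℚ) (a : Fin m → ℚ) (k l : ℕ) :
    AA d a (k + l) + 1 = AA d a k + AA d a l
      + (∑ i, (⌊d i * ((k + l : ℕ):ℚ)⌋ - ⌊d i * (k:ℚ)⌋ - ⌊d i * (l:ℚ)⌋))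
      + ∑ j, ((⌈a j * ((k + l : ℕ):ℚ)⌉ - 1) - (⌈a j * (k:ℚ)⌉ - 1) - (⌈a j * (l:ℚ)⌉ - 1)) := by
  unfold AA
  simp only [Finset.sum_sub_distrib]
  ring

lemma AA_super_d {n m : ℕ} (d : Fin n → ℚ) (a : Fin m → ℚ) (k l : ℕ) (i : Fin n) :
    AA d a k + AA d a l + (⌊d i * ((k + l : ℕ):ℚ)⌋ - ⌊d i * (k:ℚ)⌋ - ⌊d i * (l:ℚ)⌋)
      ≤ AA d a (k + l) + 1 := by
  rw [AA_eq]
  have h1 := Finset.single_le_sum (fun i _ => floor_def (d i) k l) (Finset.mem_univ i)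
  have h2 := Finset.sum_nonneg (s := Finset.univ) (fun j _ => ceil_def (a j) k l)
  linarith

lemma AA_super_a {n m : ℕ} (d : Fin n → ℚ) (a : Fin m → ℚ) (k l : ℕ) (j : Fin m) :
    AA d a k + AA d a l
      + ((⌈a j * ((k + l : ℕ):ℚ)⌉ - 1) - (⌈a j * (k:ℚ)⌉ - 1) - (⌈a j * (l:ℚ)⌉ - 1))
      ≤ AA d a (k + l) + 1 := by
  rw [AA_eq]
  have h1 := Finset.single_le_sum (fun j _ => ceil_def (a j) k l) (Finset.mem_univ j)
  have h2 := Finset.sum_nonneg (s := Finset.univ) (fun i _ => floor_def (d i) k l)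
  linarith

lemma AA_super {n m : ℕ} (d : Fin n → ℚ) (a : Fin m → ℚ) (k l : ℕ) :
    AA d a k + AA d a l ≤ AA d a (k + l) + 1 := by
  rw [AA_eq]
  have h1 := Finset.sum_nonneg (s := Finset.univ) (fun j _ => ceil_def (a j) k l)
  have h2 := Finset.sum_nonneg (s := Finset.univ) (fun i _ => floor_def (d i) k l)
  linarith

lemma AA_mul {n m : ℕ} (d : Fin n → ℚ) (a : Fin m → ℚ) (q t : ℕ) :
    ((t:ℤ) + 1) * (AA d a q - 1) ≤ AA d a ((t + 1) * q) - 1 := by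
  induction t with
  | zero => simp
  | succ t ih =>
    have := AA_super d a ((t + 1) * q) q
    rw [← Nat.succ_mul] at this
    push_cast
    simp only [Nat.succ_eq_add_one] at this
    linarith

/-- `Y` is the least value of `A(k)/k`, and is attained. -/
def Good {n m : ℕ} (d : Fin n → ℚ) (a : Fin m → ℚ) (Y : ℚ) : Prop :=
  (∀ k : ℕ, 0 < k → Y * k ≤ AA d a k) ∧ ∃ k : ℕ, 0 < k ∧ Y * k = AA d a k

lemma Good.den {n m : ℕ} {d : Fin n → ℚ} {a : Fin m → ℚ} {Y : ℚ} (h : Good d a Y) :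
    AA d a Y.den = Y.num := by
  obtain ⟨h1, k, hk, hkY⟩ := h
  have hq : 0 < Y.den := Y.den_pos
  have hY : Y * Y.den = Y.num := Rat.mul_den_eq_num Y
  have h2 := h1 Y.den hq
  rw [hY] at h2
  have h2' : Y.num ≤ AA d a Y.den := by exact_mod_cast h2
  have hdvd : Y.den ∣ k := by
    have e : Y.num * (k:ℤ) = AA d a k * Y.den := by
      have : (Y.num:ℚ) * k = AA d a k * Y.den := by rw [← hY, ← hkY]; ring
      exact_mod_cast this
    have : (Y.den:ℤ) ∣ Y.num * k := ⟨AA d a k, by rw [e]; ring⟩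
    have hc : IsCoprime (Y.den:ℤ) Y.num := by
      rw [Int.isCoprime_iff_gcd_eq_one, Int.gcd_comm]
      exact Y.reduced
    exact_mod_cast hc.dvd_of_dvd_mul_left this
  obtain ⟨t, rfl⟩ := hdvd
  obtain ⟨t, rfl⟩ : ∃ s, t = s + 1 := ⟨t - 1, by have := Nat.pos_of_mul_pos_left hk; omega⟩
  have h3 := AA_mul d a Y.den t
  rw [mul_comm (t+1) Y.den] at h3
  have h4 : AA d a (Y.den * (t + 1)) = Y.num * (t + 1) := by
    have : (AA d a (Y.den * (t + 1)) : ℚ) = Y.num * (t + 1) := by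
      rw [← hkY, ← hY]; push_cast; ring
    exact_mod_cast this
  rw [h4] at h3
  by_contra hne
  have h5 : Y.num ≤ AA d a Y.den - 1 := by omega
  have : ((t:ℤ) + 1) * Y.num ≤ (t + 1) * (AA d a Y.den - 1) :=
    mul_le_mul_of_nonneg_left h5 (by positivity)
  linarith

lemma Good.int {n m : ℕ} {d : Fin n → ℚ} {a : Fin m → ℚ} {Y : ℚ} (h : Good d a Y)
    (hY : Y.den = 1) : Y = AA d a 1 := by
  have := h.den
  rw [hY] at this
  rw [this]
  exact (Rat.den_eq_one_iff Y).1 hY |>.symm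

lemma Good.a_int {n m : ℕ} {d : Fin n → ℚ} {a : Fin m → ℚ} {Y : ℚ} (h : Good d a Y)
    (j : Fin m) (z : ℤ) (hz : (z:ℚ) = a j) : Y = AA d a 1 := by
  have key : ∀ t : ℕ, ((t:ℤ) + 1) * AA d a 1 ≤ AA d a (t + 1) := by
    intro t
    induction t with
    | zero => simp
    | succ t ih =>
      have h1 := AA_super_a d a (t + 1) 1 j
      have c : ∀ k : ℕ, ⌈a j * (k:ℚ)⌉ = z * k := by
        intro k
        rw [← hz]
        have : (z:ℚ) * k = ((z * k : ℤ) : ℚ) := by push_cast; ring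
        rw [this, Int.ceil_intCast]
      simp only [c] at h1
      push_cast at h1 ⊢
      linarith
  obtain ⟨h1, k, hk, hkY⟩ := h
  apply le_antisymm
  · simpa using h1 1 one_pos
  · obtain ⟨t, rfl⟩ : ∃ s, k = s + 1 := ⟨k - 1, by omega⟩
    have h2 : (((t:ℚ) + 1) * AA d a 1) ≤ AA d a (t + 1) := by exact_mod_cast key t
    rw [← hkY] at h2
    push_cast at h2
    have : (0:ℚ) < t + 1 := by positivity
    nlinarith

lemma Good.ge {n m : ℕ} {d : Fin n → ℚ} {a : Fin m → ℚ} {Y : ℚ} (h : Good d a Y)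
    (k : ℕ) (hk : 0 < k) : ⌈Y * k⌉ ≤ AA d a k := Int.ceil_le.2 (h.1 k hk)

lemma nonint_mul {Y : ℚ} {k : ℕ} (hk : 0 < k) (hkq : k < Y.den) : ⌈Y * k⌉ = ⌊Y * k⌋ + 1 := by
  rw [Int.ceil_eq_floor_add_one_iff_notMem]
  rintro ⟨z, hz⟩
  have e : Y.num * (k:ℤ) = z * Y.den := by
    have : (Y.num:ℚ) * k = z * Y.den := by
      rw [← Rat.mul_den_eq_num Y]; rw [hz]; ring
    exact_mod_cast this
  have h1 : (Y.den:ℤ) ∣ Y.num * k := ⟨z, by rw [e]; ring⟩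
  have hc : IsCoprime (Y.den:ℤ) Y.num := by
    rw [Int.isCoprime_iff_gcd_eq_one, Int.gcd_comm]
    exact Y.reduced
  have h2 : Y.den ∣ k := by exact_mod_cast hc.dvd_of_dvd_mul_left h1
  exact absurd (Nat.le_of_dvd hk h2) (by omega)

lemma Good.split {n m : ℕ} {d : Fin n → ℚ} {a : Fin m → ℚ} {Y : ℚ} (h : Good d a Y)
    (k l : ℕ) (hk : 0 < k) (hl : 0 < l) (hkl : k + l = Y.den) :
    AA d a k = ⌈Y * k⌉ ∧
    ∀ i, ⌊d i * (Y.den:ℚ)⌋ = ⌊d i * (k:ℚ)⌋ + ⌊d i * (l:ℚ)⌋ := by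
  have h1 := h.ge k hk
  have h2 := h.ge l hl
  have h3 : ⌈Y * l⌉ = Y.num - ⌊Y * k⌋ := by
    have : Y * l = -(Y * k) + (Y.num : ℚ) := by
      rw [← Rat.mul_den_eq_num Y, ← hkl]; push_cast; ring
    rw [this, Int.ceil_add_intCast, Int.ceil_neg]; ring
  have h4 := nonint_mul hk (by omega : k < Y.den)
  have h5 := h.den
  have h6 := AA_super d a k l
  rw [hkl] at h6
  refine ⟨by omega, fun i => ?_⟩
  have h7 := AA_super_d d a k l i
  have h8 := floor_def (d i) k l
  rw [hkl] at h7 h8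
  omega

lemma Good.two {n m : ℕ} {d : Fin n → ℚ} {a : Fin m → ℚ} {Y : ℚ} (h : Good d a Y)
    (hq : 3 ≤ Y.den) (i : Fin n) (hi : 2 * ⌊d i⌋ < ⌊d i * 2⌋) : 2 * ⌈Y⌉ ≤ ⌈Y * 2⌉ := by
  have h1 := (h.split 1 (Y.den - 1) (by omega) (by omega) (by omega)).1
  have h2 := (h.split 2 (Y.den - 2) (by omega) (by omega) (by omega)).1
  have h3 := AA_super_d d a 1 1 i
  norm_num at h1 h2 h3
  omega

lemma isInt_iff (x : ℚ) : (∃ z : ℤ, (z:ℚ) = x) ↔ ⌈x⌉ = ⌊x⌋ := by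
  constructor
  · rintro ⟨z, rfl⟩; simp
  · intro h
    refine ⟨⌊x⌋, le_antisymm (Int.floor_le x) ?_⟩
    rw [← h]; exact Int.le_ceil x

lemma d_case {n m : ℕ} {d : Fin n → ℚ} {a b : Fin m → ℚ} {Y : ℚ} (hA : Good d a Y)
    (hB : Good (fun i => - d i) b (-Y)) (i : Fin n) (hi : ¬ ∃ z : ℤ, (z:ℚ) = d i) :
    Y.den = 1 := by
  by_contra hq1
  have hpos := Y.den_pos
  have hden : (-Y).den = Y.den := Rat.neg_den Y
  have hs : ∀ k l : ℕ, 0 < k → 0 < l → k + l = Y.den →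
      ⌊d i * (Y.den:ℚ)⌋ = ⌊d i * (k:ℚ)⌋ + ⌊d i * (l:ℚ)⌋ ∧
      ⌈d i * (Y.den:ℚ)⌉ = ⌈d i * (k:ℚ)⌉ + ⌈d i * (l:ℚ)⌉ := by
    intro k l hk hl hkl
    refine ⟨(hA.split k l hk hl hkl).2 i, ?_⟩
    have := (hB.split k l hk hl (by rw [hden]; exact hkl)).2 i
    rw [hden] at this
    simp only [neg_mul, Int.floor_neg] at this
    omega
  have fc : ∀ x : ℚ, ⌊x⌋ ≤ ⌈x⌉ ∧ ⌈x⌉ ≤ ⌊x⌋ + 1 := fun x =>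
    ⟨Int.floor_le_ceil x, Int.ceil_le_floor_add_one x⟩
  have hdi := (isInt_iff (d i)).not.1 hi
  obtain ⟨s1, s2⟩ := hs 1 (Y.den - 1) (by omega) (by omega) (by omega)
  simp only [Nat.cast_one, mul_one] at s1 s2
  have f0 := fc (d i)
  have f1 := fc (d i * (Y.den:ℚ))
  have f2 := fc (d i * ((Y.den - 1 : ℕ):ℚ))
  have hint : ∃ z : ℤ, (z:ℚ) = d i * ((Y.den - 1 : ℕ):ℚ) := (isInt_iff _).2 (by omega)
  have hq2 : Y.den ≠ 2 := by
    intro h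
    rw [h] at hint
    norm_num at hint
    exact hi (by simpa using hint)
  have hq3 : 3 ≤ Y.den := by omega
  obtain ⟨t1, t2⟩ := hs 2 (Y.den - 2) (by omega) (by omega) (by omega)
  have f3 := fc (d i * ((2:ℕ):ℚ))
  have f4 := fc (d i * ((Y.den - 2 : ℕ):ℚ))
  have hn2 : ¬ ∃ z : ℤ, (z:ℚ) = d i * ((Y.den - 2 : ℕ):ℚ) := by
    rintro ⟨w, hw⟩
    obtain ⟨z, hz⟩ := hint
    refine hi ⟨z - w, ?_⟩
    push_cast
    rw [hz, hw, Nat.cast_sub (by omega), Nat.cast_sub (by omega)]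
    push_cast; ring
  rw [isInt_iff] at hn2
  have h2 : ⌈d i * ((2:ℕ):ℚ)⌉ = ⌊d i * ((2:ℕ):ℚ)⌋ := by omega
  obtain ⟨z, hz⟩ := (isInt_iff _).2 h2
  have hz' : d i * 2 = z := by rw [hz]; norm_num
  have hzodd : z ≠ 2 * ⌊d i⌋ ∧ z ≠ 2 * ⌈d i⌉ := by
    constructor
    · intro h
      refine hi ⟨⌊d i⌋, ?_⟩
      have : (z:ℚ) = 2 * ⌊d i⌋ := by exact_mod_cast h
      linarith
    · intro h
      refine hi ⟨⌈d i⌉, ?_⟩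
      have : (z:ℚ) = 2 * ⌈d i⌉ := by exact_mod_cast h
      linarith
  have hz1 : 2 * ⌊d i⌋ ≤ z := by
    have : (2 * ⌊d i⌋ : ℚ) ≤ z := by have := Int.floor_le (d i); linarith
    exact_mod_cast this
  have hz2 : z ≤ 2 * ⌈d i⌉ := by
    have : (z:ℚ) ≤ 2 * ⌈d i⌉ := by have := Int.le_ceil (d i); linarith
    exact_mod_cast this
  have g1 := hA.two hq3 i (by rw [hz', Int.floor_intCast]; omega)
  have g2 := hB.two (by rw [hden]; exact hq3) i (by
    simp only [neg_mul, Int.floor_neg]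
    rw [hz', Int.ceil_intCast]; omega)
  simp only [neg_mul, Int.ceil_neg] at g2
  have g3 := nonint_mul (Y := Y) one_pos (by omega)
  have g4 := fc (Y * 2)
  simp only [Nat.cast_one, mul_one] at g3
  omega

/-- Proposition 4.6: not a solid torus, `n̄_D + N_G > 0`; if the greatest element `y₋`
of `{y₋(k)}` equals the least element `y₊` of `{y₊(k)}`, then
`y₋ = y₋(1)`, `y₊ = y₊(1)`, and `y₋ ∈ ℤ`. -/
theorem stmt_10 (n m : ℕ) (d : Fin n → ℚ) (a b : Fin m → ℚ)
    (hnst : 1 ≤ m ∨ ∃ i j : Fin n, i ≠ j ∧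
      (¬∃ z : ℤ, (z:ℚ) = d i) ∧ (¬∃ z : ℤ, (z:ℚ) = d j))
    (hpos : 0 < Nat.card {i : Fin n // ¬∃ z : ℤ, (z:ℚ) = d i}
      + (Nat.card {j : Fin m // ∃ z : ℤ, (z:ℚ) = a j}
        + Nat.card {j : Fin m // ∃ z : ℤ, (z:ℚ) = b j}))
    (fneg fpos : ℕ → ℚ)
    (hfneg : ∀ k : ℕ, 0 < k →
      fneg k = -(1/(k:ℚ)) * (1 + (∑ i, (⌊d i * (k:ℚ)⌋ : ℚ))
        + ∑ j, ((⌈a j * (k:ℚ)⌉ : ℚ) - 1)))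
    (hfpos : ∀ k : ℕ, 0 < k →
      fpos k = -(1/(k:ℚ)) * (-1 + (∑ i, (⌈d i * (k:ℚ)⌉ : ℚ))
        + ∑ j, ((⌊b j * (k:ℚ)⌋ : ℚ) + 1)))
    (yneg ypos : ℚ)
    (hyneg : IsGreatest {x : ℚ | ∃ k : ℕ, 0 < k ∧ x = fneg k} yneg)
    (hypos : IsLeast {x : ℚ | ∃ k : ℕ, 0 < k ∧ x = fpos k} ypos)
    (heq : yneg = ypos) :
    yneg = fneg 1 ∧ ypos = fpos 1 ∧ ∃ z : ℤ, (z:ℚ) = yneg := by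
  have hA : ∀ k : ℕ, 0 < k → fneg k * k = -(AA d a k : ℚ) := by
    intro k hk
    have : (k:ℚ) ≠ 0 := by positivity
    rw [hfneg k hk]
    unfold AA
    push_cast
    field_simp
  have hB : ∀ k : ℕ, 0 < k → fpos k * k = (AA (fun i => -d i) (fun j => -b j) k : ℚ) := by
    intro k hk
    have : (k:ℚ) ≠ 0 := by positivity
    rw [hfpos k hk]
    unfold AA
    simp only [neg_mul, Int.floor_neg, Int.ceil_neg]
    push_cast
    have e : (∑ j, (-(⌊b j * (k:ℚ)⌋:ℚ) - 1)) = -∑ j, ((⌊b j * (k:ℚ)⌋:ℚ) + 1) := by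
      rw [← Finset.sum_neg_distrib]
      exact Finset.sum_congr rfl (fun j _ => by ring)
    rw [e, Finset.sum_neg_distrib]
    field_simp
    ring
  subst heq
  have gA : Good d a (-yneg) := by
    obtain ⟨⟨k, hk, hy⟩, hub⟩ := hyneg
    refine ⟨fun l hl => ?_, k, hk, ?_⟩
    · have h1 : fneg l ≤ yneg := hub ⟨l, hl, rfl⟩
      have h2 := hA l hl
      have h3 : fneg l * l ≤ yneg * l := mul_le_mul_of_nonneg_right h1 (by positivity)
      linarith
    · have h2 := hA k hk
      rw [hy]; linarith
  have gB : Good (fun i => -d i) (fun j => -b j) (- -yneg) := by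
    rw [neg_neg]
    obtain ⟨⟨k, hk, hy⟩, hlb⟩ := hypos
    refine ⟨fun l hl => ?_, k, hk, ?_⟩
    · have h1 : yneg ≤ fpos l := hlb ⟨l, hl, rfl⟩
      rw [← hB l hl]
      exact mul_le_mul_of_nonneg_right h1 (by positivity)
    · rw [← hB k hk, ← hy]
  have hden : (-yneg).den = 1 := by
    by_cases h1 : ∃ i, ¬∃ z : ℤ, (z:ℚ) = d i
    · obtain ⟨i, hi⟩ := h1
      exact d_case gA gB i hi
    by_cases h2 : ∃ j, ∃ z : ℤ, (z:ℚ) = a j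
    · obtain ⟨j, z, hz⟩ := h2
      rw [gA.a_int j z hz, Rat.den_intCast]
    by_cases h3 : ∃ j, ∃ z : ℤ, (z:ℚ) = b j
    · obtain ⟨j, z, hz⟩ := h3
      rw [← Rat.neg_den, gB.a_int j (-z) (by push_cast; rw [hz]), Rat.den_intCast]
    exfalso
    have e1 : IsEmpty {i : Fin n // ¬∃ z : ℤ, (z:ℚ) = d i} := ⟨fun x => h1 ⟨x.1, x.2⟩⟩
    have e2 : IsEmpty {j : Fin m // ∃ z : ℤ, (z:ℚ) = a j} := ⟨fun x => h2 ⟨x.1, x.2⟩⟩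
    have e3 : IsEmpty {j : Fin m // ∃ z : ℤ, (z:ℚ) = b j} := ⟨fun x => h3 ⟨x.1, x.2⟩⟩
    rw [Nat.card_of_isEmpty, Nat.card_of_isEmpty, Nat.card_of_isEmpty] at hpos
    omega
  have r1 := gA.int hden
  have r2 := gB.int (by rw [Rat.neg_den]; exact hden)
  have k1 := hA 1 one_pos
  have k2 := hB 1 one_pos
  rw [Nat.cast_one, mul_one] at k1 k2
  refine ⟨by linarith, by linarith, -AA d a 1, ?_⟩
  push_cast
  linarith
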